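/- Let s_A, s_B be positive integers and let Δ be the standard 2s_A × 2s_A symplectic matrix (the block matrix [[0, I_{s_A}], [−I_{s_A}, 0]]). For each n ≥ 0 let K_n be a real 2s_A × 2s_B matrix, ℓ_n ∈ ℝ^{2s_B}, and α_n a real symmetric 2s_B × 2s_B matrix. Suppose that for every m ∈ ℝ^{2s_A}, every real symmetric 2s_A × 2s_A matrix σ such that both complex matrices σ + iΔ and σ − iΔ are positive semidefinite, and every z ∈ ℝ^{2s_B}, one has exp(i⟨mᵀK_n + ℓ_n, z⟩ − ½ zᵀ(α_n + K_nᵀ σ K_n) z) → exp(i⟨mᵀK_0 + ℓ_0, z⟩ − ½ zᵀ(α_0 + K_0ᵀ σ K_0) z) as n → ∞. Then K_n → K_0, ℓ_n → ℓ_0 and α_n → α_0 (entrywise). -/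

import Mathlib

open Filter Topology Matrix
open scoped ComplexOrder

/-- Real numbers converge as soon as the characteristic functions of their Dirac masses do. -/
theorem tendsto_of_tendsto_cexp {x : ℕ → ℝ} {a : ℝ}
    (h : ∀ t : ℝ, Tendsto (fun n => Complex.exp (Complex.I * ((t * x n : ℝ) : ℂ))) atTop
      (𝓝 (Complex.exp (Complex.I * ((t * a : ℝ) : ℂ))))) :
    Tendsto x atTop (𝓝 a) := by
  have charFun_dirac (b t : ℝ) : MeasureTheory.charFun
      (MeasureTheory.diracProba b : MeasureTheory.Measure ℝ) t
        = Complex.exp (Complex.I * ((t * b : ℝ) : ℂ)) := by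
    simp [MeasureTheory.diracProba, mul_comm]
  refine MeasureTheory.isEmbedding_diracProba.tendsto_nhds_iff.2
    (MeasureTheory.ProbabilityMeasure.tendsto_iff_tendsto_charFun.2 fun t => ?_)
  simpa only [Function.comp_apply, charFun_dirac] using h t

/-- If `exp(ip - q/2)` converges, then so does its exponent's real part. -/
theorem tendsto_re_of_tendsto_cexp {p q : ℕ → ℝ} {p₀ q₀ : ℝ}
    (h : Tendsto (fun n => Complex.exp (Complex.I * (p n : ℂ) - (1 / 2 : ℂ) * (q n : ℂ))) atTop
      (𝓝 (Complex.exp (Complex.I * (p₀ : ℂ) - (1 / 2 : ℂ) * (q₀ : ℂ))))) :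
    Tendsto q atTop (𝓝 q₀) := by
  have hnorm := h.norm
  simp only [Complex.norm_exp] at hnorm
  have hlog := hnorm.log (Real.exp_ne_zero _)
  simp only [Real.log_exp] at hlog
  simpa using hlog.const_mul (-2)

/-- If `exp(ip - q/2)` converges, then so does its phase. -/
theorem tendsto_phase_of_tendsto_cexp {p q : ℕ → ℝ} {p₀ q₀ : ℝ}
    (h : Tendsto (fun n => Complex.exp (Complex.I * (p n : ℂ) - (1 / 2 : ℂ) * (q n : ℂ))) atTop
      (𝓝 (Complex.exp (Complex.I * (p₀ : ℂ) - (1 / 2 : ℂ) * (q₀ : ℂ))))) :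
    Tendsto (fun n => Complex.exp (Complex.I * (p n : ℂ))) atTop
      (𝓝 (Complex.exp (Complex.I * (p₀ : ℂ)))) := by
  have hq : Tendsto (fun n => Complex.exp ((1 / 2 : ℂ) * (q n : ℂ))) atTop
      (𝓝 (Complex.exp ((1 / 2 : ℂ) * (q₀ : ℂ)))) :=
    (((Complex.continuous_ofReal.tendsto _).comp (tendsto_re_of_tendsto_cexp h)).const_mul _).cexp
  simpa only [← Complex.exp_add, sub_add_cancel] using h.mul hq

/-- A Hermitian matrix with `M * M = 2 • M` is positive semidefinite. -/
theorem Matrix.IsHermitian.posSemidef_of_mul_self {ι : Type*} [Fintype ι]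
    {M : Matrix ι ι ℂ} (hM : M.IsHermitian) (h : M * M = (2 : ℂ) • M) : M.PosSemidef := by
  have hpos := (posSemidef_conjTranspose_mul_self M).smul (one_half_pos (α := ℂ)).le
  rwa [hM.eq, h, smul_smul, one_div, inv_mul_cancel₀ two_ne_zero, one_smul] at hpos

/-- For a real skew-symmetric complex structure `D`, the matrix `1 + iD` is positive
semidefinite. -/
theorem posSemidef_one_add_I_smul {ι : Type*} [Fintype ι] [DecidableEq ι]
    {D : Matrix ι ι ℝ} (hskew : Dᵀ = -D) (hsq : D * D = -1) :
    ((1 : Matrix ι ι ℝ).map Complex.ofReal + Complex.I • D.map Complex.ofReal).PosSemidef := by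
  have hone : (1 : Matrix ι ι ℝ).map Complex.ofReal = 1 := by simp
  have hsq_map : D.map Complex.ofReal * D.map Complex.ofReal = -1 := by
    have := congrArg (fun A : Matrix ι ι ℝ => A.map Complex.ofRealHom) hsq
    simp only [Matrix.map_mul] at this
    refine this.trans ?_
    ext i j
    by_cases hij : i = j <;> simp [hij]
  have hadj : (D.map Complex.ofReal)ᴴ = -D.map Complex.ofReal := by
    ext i j
    have := congrFun (congrFun hskew i) j
    simp only [transpose_apply, Matrix.neg_apply] at this
    simp [conjTranspose_apply, this]
  rw [hone]
  refine Matrix.IsHermitian.posSemidef_of_mul_self ?_ ?_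
  · simp [Matrix.IsHermitian, conjTranspose_add, conjTranspose_smul, hadj]
  · rw [add_mul, mul_add, mul_add, smul_mul_smul_comm, hsq_map, Complex.I_mul_I]
    simp only [one_mul, mul_one, neg_smul, one_smul, neg_neg, two_smul]
    abel

/-- A sequence of real symmetric matrices converges entrywise if its quadratic forms converge. -/
theorem tendsto_apply_of_tendsto_quadratic {ι : Type*} [Fintype ι] [DecidableEq ι]
    {A : ℕ → Matrix ι ι ℝ} {A₀ : Matrix ι ι ℝ} (hA : ∀ n, (A n).IsSymm) (hA₀ : A₀.IsSymm)
    (h : ∀ z, Tendsto (fun n => z ⬝ᵥ (A n *ᵥ z)) atTop (𝓝 (z ⬝ᵥ (A₀ *ᵥ z)))) (i j : ι) :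
    Tendsto (fun n => A n i j) atTop (𝓝 (A₀ i j)) := by
  have polar {B : Matrix ι ι ℝ} (hB : B.IsSymm) :
      B i j = ((Pi.single i 1 + Pi.single j 1) ⬝ᵥ (B *ᵥ (Pi.single i 1 + Pi.single j 1))
        - Pi.single i 1 ⬝ᵥ (B *ᵥ Pi.single i 1) - Pi.single j 1 ⬝ᵥ (B *ᵥ Pi.single j 1)) / 2 := by
    simp only [mulVec_add, add_dotProduct, dotProduct_add, single_one_dotProduct,
      mulVec_single_one, col_apply, hB.apply i j]
    ring
  simp only [polar hA₀, fun n => polar (hA n)]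
  exact (((h _).sub (h _)).sub (h _)).div_const 2

/-- Let `Δ` be the standard symplectic matrix on `ℝ^{2s_A}` and, for each
`n ≥ 0`, let `(K_n, ℓ_n, α_n)` be Gaussian-channel parameters (`K_n` a real `2s_A × 2s_B`
matrix, `ℓ_n ∈ ℝ^{2s_B}`, `α_n` real symmetric). If for every mean `m ∈ ℝ^{2s_A}`, every real
symmetric covariance matrix `σ` with `σ ± iΔ` positive semidefinite, and every `z ∈ ℝ^{2s_B}`
the Gaussian characteristic functions
`exp(i⟨mᵀK_n + ℓ_n, z⟩ − ½ zᵀ(α_n + K_nᵀ σ K_n) z)` converge to the one with parameters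
`(K_0, ℓ_0, α_0)`, then `K_n → K_0`, `ℓ_n → ℓ_0` and `α_n → α_0` entrywise. -/
theorem gaussian_channel_params_converge_of_char_functions
    (sA sB : ℕ) (hsA : 0 < sA) (hsB : 0 < sB)
    (Δ : Matrix (Fin sA ⊕ Fin sA) (Fin sA ⊕ Fin sA) ℝ)
    (hΔ : Δ = Matrix.fromBlocks 0 1 (-1) 0)
    (K : ℕ → Matrix (Fin sA ⊕ Fin sA) (Fin (2 * sB)) ℝ)
    (ℓ : ℕ → Fin (2 * sB) → ℝ)
    (α : ℕ → Matrix (Fin (2 * sB)) (Fin (2 * sB)) ℝ)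
    (hαsymm : ∀ n, (α n).IsSymm)
    (hconv : ∀ (m : Fin sA ⊕ Fin sA → ℝ)
      (σ : Matrix (Fin sA ⊕ Fin sA) (Fin sA ⊕ Fin sA) ℝ), σ.IsSymm →
      (Matrix.PosSemidef (σ.map Complex.ofReal + Complex.I • Δ.map Complex.ofReal)) →
      (Matrix.PosSemidef (σ.map Complex.ofReal - Complex.I • Δ.map Complex.ofReal)) →
      ∀ z : Fin (2 * sB) → ℝ,
        Tendsto
          (fun n => Complex.exp (Complex.I * (((m ᵥ* K n) + ℓ n) ⬝ᵥ z : ℝ)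
            - (1 / 2 : ℂ) * ((z ⬝ᵥ ((α n + (K n)ᵀ * σ * K n) *ᵥ z) : ℝ) : ℂ)))
          atTop
          (𝓝 (Complex.exp (Complex.I * (((m ᵥ* K 0) + ℓ 0) ⬝ᵥ z : ℝ)
            - (1 / 2 : ℂ) * ((z ⬝ᵥ ((α 0 + (K 0)ᵀ * σ * K 0) *ᵥ z) : ℝ) : ℂ))))) :
    (∀ i j, Tendsto (fun n => K n i j) atTop (𝓝 (K 0 i j))) ∧
    (∀ i, Tendsto (fun n => ℓ n i) atTop (𝓝 (ℓ 0 i))) ∧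
    (∀ i j, Tendsto (fun n => α n i j) atTop (𝓝 (α 0 i j))) := by
  have hskew : Δᵀ = -Δ := by
    simp [hΔ, fromBlocks_transpose, fromBlocks_neg]
  have hsq : Δ * Δ = -1 := by
    rw [hΔ, fromBlocks_multiply, ← fromBlocks_one, fromBlocks_neg]
    simp
  have hplus := posSemidef_one_add_I_smul hskew hsq
  have hminus := posSemidef_one_add_I_smul (D := -Δ) (by rw [transpose_neg, hskew])
    (by rw [neg_mul_neg, hsq])
  have hmap : (-Δ).map Complex.ofReal = -Δ.map Complex.ofReal := by ext; simp
  rw [hmap, smul_neg, ← sub_eq_add_neg] at hminus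
  have hchar := fun m => hconv m 1 isSymm_one hplus hminus
  have hphase := fun m z => tendsto_phase_of_tendsto_cexp (hchar m z)
  have hℓ : ∀ i, Tendsto (fun n => ℓ n i) atTop (𝓝 (ℓ 0 i)) := fun i =>
    tendsto_of_tendsto_cexp fun t => by
      simpa [mul_comm] using hphase 0 (Pi.single i t)
  have hK : ∀ i j, Tendsto (fun n => K n i j) atTop (𝓝 (K 0 i j)) := by
    intro i j
    have hsum : Tendsto (fun n => K n i j + ℓ n j) atTop (𝓝 (K 0 i j + ℓ 0 j)) :=
      tendsto_of_tendsto_cexp fun t => by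
        simpa [mul_comm] using hphase (Pi.single i 1) (Pi.single j t)
    simpa using hsum.sub (hℓ j)
  refine ⟨hK, hℓ, tendsto_apply_of_tendsto_quadratic hαsymm (hαsymm 0) fun z => ?_⟩
  have hKlim : Tendsto K atTop (𝓝 (K 0)) :=
    tendsto_pi_nhds.2 fun i => tendsto_pi_nhds.2 (hK i)
  have hquad : Tendsto (fun n => z ⬝ᵥ (((K n)ᵀ * K n) *ᵥ z)) atTop
      (𝓝 (z ⬝ᵥ (((K 0)ᵀ * K 0) *ᵥ z))) :=
    ((by fun_prop : Continuous fun M : Matrix (Fin sA ⊕ Fin sA) (Fin (2 * sB)) ℝ =>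
      z ⬝ᵥ ((Mᵀ * M) *ᵥ z)).tendsto _).comp hKlim
  simpa [add_mulVec, dotProduct_add] using (tendsto_re_of_tendsto_cexp (hchar 0 z)).sub hquad
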